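/- A 4-form σ on ℝ^8 satisfies Ω_Φ(σ) = 4σ if and only if σ_{ijkl}Φ_{mjkl} = 0 for all i,m (sum over j,k,l); moreover this eigenspace Λ⁴₂₇ has dimension 27. -/

import Mathlib

/-!
We work in ℝ⁸ with the standard basis `e₀, …, e₇`.  A `k`-form is a totally antisymmetric
map `(Fin 8)^k → ℝ`; repeated indices are summed over `Fin 8` and `kd` is the Kronecker
delta.  `Phi` is the fundamental 4-form of the standard `Spin(7)`-structure on ℝ⁸,
`Φ = -e₀₁₂₇ + e₀₂₃₆ - e₀₃₄₇ - e₀₅₆₇ + e₀₁₄₆ + e₀₂₄₅ - e₀₁₃₅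
     - e₃₄₅₆ - e₁₄₅₇ - e₁₂₅₆ - e₁₂₃₄ - e₂₃₅₇ - e₁₃₆₇ + e₂₄₆₇`.
-/

noncomputable section

/-- Kronecker delta on `Fin 8`. -/
def kd (a b : Fin 8) : ℝ := if a = b then 1 else 0

/-- Component at the indices `(i,j,k,l)` of the wedge product `e_a ∧ e_b ∧ e_c ∧ e_d`
of standard coordinate 1-forms, normalized so that `(e_a ∧ e_b ∧ e_c ∧ e_d)_{abcd} = 1`;
it is the alternating sum of products of Kronecker deltas. -/
def wedge4 (a b c d i j k l : Fin 8) : ℝ :=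
  Matrix.det !![kd a i, kd a j, kd a k, kd a l;
                kd b i, kd b j, kd b k, kd b l;
                kd c i, kd c j, kd c k, kd c l;
                kd d i, kd d j, kd d k, kd d l]

/-- The fundamental 4-form `Φ` of the standard `Spin(7)`-structure on `ℝ⁸`, in components:
the totally antisymmetric 4-tensor with `Φ_{0127} = -1`, `Φ_{0236} = 1`, `Φ_{0347} = -1`,
`Φ_{0567} = -1`, `Φ_{0146} = 1`, `Φ_{0245} = 1`, `Φ_{0135} = -1`, `Φ_{3456} = -1`,
`Φ_{1457} = -1`, `Φ_{1256} = -1`, `Φ_{1234} = -1`, `Φ_{2357} = -1`, `Φ_{1367} = -1`,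
`Φ_{2467} = 1`, all components not obtained from these by permutation being zero. -/
def Phi (i j k l : Fin 8) : ℝ :=
    -wedge4 0 1 2 7 i j k l + wedge4 0 2 3 6 i j k l - wedge4 0 3 4 7 i j k l
  - wedge4 0 5 6 7 i j k l + wedge4 0 1 4 6 i j k l + wedge4 0 2 4 5 i j k l
  - wedge4 0 1 3 5 i j k l - wedge4 3 4 5 6 i j k l - wedge4 1 4 5 7 i j k l
  - wedge4 1 2 5 6 i j k l - wedge4 1 2 3 4 i j k l - wedge4 2 3 5 7 i j k l
  - wedge4 1 3 6 7 i j k l + wedge4 2 4 6 7 i j k l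

/-- Totally antisymmetric 4-tensors on ℝ⁸ (4-forms). -/
def FourForm : Submodule ℝ (Fin 8 → Fin 8 → Fin 8 → Fin 8 → ℝ) where
  carrier :=
    {σ | ∀ i j k l, σ i j k l = -σ j i k l ∧ σ i j k l = -σ i k j l ∧ σ i j k l = -σ i j l k}
  zero_mem' := by intro i j k l; refine ⟨by simp, by simp, by simp⟩
  add_mem' := by
    intro a b ha hb i j k l
    refine ⟨?_, ?_, ?_⟩
    · simp only [Pi.add_apply, (ha i j k l).1, (hb i j k l).1]; ring
    · simp only [Pi.add_apply, (ha i j k l).2.1, (hb i j k l).2.1]; ring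
    · simp only [Pi.add_apply, (ha i j k l).2.2, (hb i j k l).2.2]; ring
  smul_mem' := by
    intro c a ha i j k l
    refine ⟨?_, ?_, ?_⟩
    · simp only [Pi.smul_apply, smul_eq_mul, (ha i j k l).1]; ring
    · simp only [Pi.smul_apply, smul_eq_mul, (ha i j k l).2.1]; ring
    · simp only [Pi.smul_apply, smul_eq_mul, (ha i j k l).2.2]; ring

/-- The operator `Ω_Φ` on 4-tensors:
`(Ω_Φ(σ))_{ijkl} = σ_{ijpq}Φ_{pqkl} + σ_{ikpq}Φ_{pqlj} + σ_{ilpq}Φ_{pqjk}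
                 + σ_{jkpq}Φ_{pqil} + σ_{jlpq}Φ_{pqki} + σ_{klpq}Φ_{pqij}`. -/
def OmegaOp : (Fin 8 → Fin 8 → Fin 8 → Fin 8 → ℝ) →ₗ[ℝ] (Fin 8 → Fin 8 → Fin 8 → Fin 8 → ℝ) where
  toFun σ := fun i j k l =>
    (∑ p, ∑ q, σ i j p q * Phi p q k l) + (∑ p, ∑ q, σ i k p q * Phi p q l j)
    + (∑ p, ∑ q, σ i l p q * Phi p q j k) + (∑ p, ∑ q, σ j k p q * Phi p q i l)
    + (∑ p, ∑ q, σ j l p q * Phi p q k i) + (∑ p, ∑ q, σ k l p q * Phi p q i j)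
  map_add' σ τ := by
    funext i j k l
    simp only [Pi.add_apply, add_mul, Finset.sum_add_distrib]
    ring
  map_smul' c σ := by
    funext i j k l
    simp only [Pi.smul_apply, smul_eq_mul, RingHom.id_apply, Finset.mul_sum, mul_assoc, mul_add]

/-! ### Formal linear combinations and their normal form -/

/-- Formal integer combinations of coordinates labelled by natural numbers. -/
abbrev LF := List (ℤ × ℕ)

/-- Evaluation of a formal combination. -/
def ev (s : ℕ → ℝ) (L : LF) : ℝ := (L.map fun x => (x.1 : ℝ) * s x.2).sum

def scaleLF (c : ℤ) (L : LF) : LF := L.map fun x => (c * x.1, x.2)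

def insLF (c : ℤ) (m : ℕ) : LF → LF
  | [] => if c = 0 then [] else [(c, m)]
  | x :: t => if m = x.2 then (if c + x.1 = 0 then t else (c + x.1, m) :: t)
      else x :: insLF c m t

def nrmLF : LF → LF
  | [] => []
  | x :: t => insLF x.1 x.2 (nrmLF t)

@[simp] lemma ev_nil (s : ℕ → ℝ) : ev s [] = 0 := by simp [ev]

@[simp] lemma ev_cons (s : ℕ → ℝ) (x : ℤ × ℕ) (L : LF) :
    ev s (x :: L) = (x.1 : ℝ) * s x.2 + ev s L := by simp [ev]

@[simp] lemma ev_append (s : ℕ → ℝ) (L M : LF) : ev s (L ++ M) = ev s L + ev s M := by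
  simp [ev]

@[simp] lemma ev_scale (s : ℕ → ℝ) (c : ℤ) (L : LF) : ev s (scaleLF c L) = (c : ℝ) * ev s L := by
  induction L with
  | nil => simp [scaleLF]
  | cons x t ih =>
    have : scaleLF c (x :: t) = (c * x.1, x.2) :: scaleLF c t := rfl
    rw [this, ev_cons, ev_cons, ih]; push_cast; ring

lemma ev_ins (s : ℕ → ℝ) (c : ℤ) (m : ℕ) (L : LF) :
    ev s (insLF c m L) = (c : ℝ) * s m + ev s L := by
  induction L with
  | nil => by_cases h : c = 0 <;> simp [insLF, h]
  | cons x t ih =>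
    unfold insLF
    split_ifs with h1 h2
    · have h3 : (c : ℝ) + x.1 = 0 := by exact_mod_cast h2
      rw [ev_cons, ← h1]; linear_combination (-s m) * h3
    · rw [ev_cons, ev_cons, ← h1]; push_cast; ring
    · rw [ev_cons, ev_cons, ih]; ring

lemma ev_nrm (s : ℕ → ℝ) (L : LF) : ev s (nrmLF L) = ev s L := by
  induction L with
  | nil => rfl
  | cons x t ih => rw [nrmLF, ev_ins, ih, ev_cons]

lemma ev_eq_zero_of_nrm (s : ℕ → ℝ) (L : LF) (h : nrmLF L = []) : ev s L = 0 := by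
  rw [← ev_nrm, h, ev_nil]

/-- A single term, with its coefficient brought into literal form. -/
def oneLF (c : ℤ) (m : ℕ) : LF :=
  if c = 0 then [] else if c = 1 then [(1, m)] else if c = -1 then [(-1, m)] else [(c, m)]

lemma ev_one (s : ℕ → ℝ) (c : ℤ) (m : ℕ) : ev s (oneLF c m) = (c : ℝ) * s m := by
  unfold oneLF; split_ifs <;> simp_all

lemma ev_flatMap {α : Type*} (s : ℕ → ℝ) (l : List α) (f : α → LF) :
    ev s (l.flatMap f) = (l.map fun a => ev s (f a)).sum := by
  induction l with
  | nil => simp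
  | cons a t ih => simp [List.flatMap_cons, ih]

/-! ### Signs, masks and the integer version of `Φ` -/

def sg2 (a b : Fin 8) : ℤ := if a < b then 1 else if b < a then -1 else 0

def sg (i j k l : Fin 8) : ℤ :=
  sg2 i j * sg2 i k * sg2 i l * sg2 j k * sg2 j l * sg2 k l

def msk (i j k l : Fin 8) : ℕ :=
  Nat.add (Nat.add (Nat.pow 2 i.val) (Nat.pow 2 j.val)) (Nat.add (Nat.pow 2 k.val) (Nat.pow 2 l.val))

lemma msk_eq (i j k l : Fin 8) : msk i j k l = 2 ^ i.val + 2 ^ j.val + (2 ^ k.val + 2 ^ l.val) := rfl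

def dec (m : ℕ) : Fin 8 × Fin 8 × Fin 8 × Fin 8 :=
  match (List.finRange 8).filter (fun i => m.testBit i.val) with
  | [a, b, c, d] => (a, b, c, d)
  | _ => (0, 0, 0, 0)

/-- `Nat.testBit` through the primitive operations. -/
def tb (x m : ℕ) : Bool := Nat.beq (Nat.land 1 (Nat.shiftRight x m)) 1

lemma tb_eq (x m : ℕ) : tb x m = Nat.testBit x m := by
  have h : Nat.land 1 (Nat.shiftRight x m) = (x >>> m) % 2 := by
    have := Nat.and_one_is_mod (x >>> m)
    rw [Nat.land_comm] at this
    exact this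
  rw [Nat.testBit_eq_decide_div_mod_eq, tb, h, Nat.shiftRight_eq_div_pow]
  exact Bool.eq_iff_iff.mpr (by rw [Nat.beq_eq, decide_eq_true_iff])

/-- The masks `77, 83, 53, 212` carry `+1`, and
`135, 153, 225, 43, 120, 178, 102, 30, 172, 202` carry `-1`; stored as bit sets. -/
def phT (m : ℕ) : ℤ :=
  bif tb 6582018229284824168619876730229402019940765984827695514693664768 m then 1
  else bif tb 53919899762053845735502473346579693138969538244937640423060456603648 m then -1 else 0

/-- Bit set of all masks on which `phT` is nonzero. -/
def phS (m : ℕ) : Bool := tb 53926481780283130559671093223309922540989479010922468118575150268416 m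

lemma phT_zero (m : ℕ) (h : phS m = false) : phT m = 0 := by
  have e : 53926481780283130559671093223309922540989479010922468118575150268416 = 6582018229284824168619876730229402019940765984827695514693664768 ||| 53919899762053845735502473346579693138969538244937640423060456603648 := by decide +kernel
  unfold phS at h
  rw [tb_eq, e, Nat.testBit_or, Bool.or_eq_false_iff] at h
  simp [phT, tb_eq, h.1, h.2]

def F8 : List (Fin 8) :=
  [⟨0, by omega⟩, ⟨1, by omega⟩, ⟨2, by omega⟩, ⟨3, by omega⟩,
   ⟨4, by omega⟩, ⟨5, by omega⟩, ⟨6, by omega⟩, ⟨7, by omega⟩]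

lemma ev_flatMap_fin (s : ℕ → ℝ) (f : Fin 8 → LF) :
    ev s (F8.flatMap f) = ∑ a, ev s (f a) := by
  rw [ev_flatMap, Fin.sum_univ_def]; rfl

def phZ (i j k l : Fin 8) : ℤ := phT (msk i j k l) * sg i j k l

lemma sg2_swap (a b : Fin 8) : sg2 a b = -sg2 b a := by
  unfold sg2; split_ifs <;> omega

lemma sg_swap1 (i j k l : Fin 8) : sg i j k l = -sg j i k l := by
  unfold sg; rw [sg2_swap i j]; ring

lemma sg_swap2 (i j k l : Fin 8) : sg i j k l = -sg i k j l := by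
  unfold sg; rw [sg2_swap j k]; ring

lemma sg_swap3 (i j k l : Fin 8) : sg i j k l = -sg i j l k := by
  unfold sg; rw [sg2_swap k l]; ring

lemma msk_swap1 (i j k l : Fin 8) : msk i j k l = msk j i k l := by
  simp only [msk_eq]; ring
lemma msk_swap2 (i j k l : Fin 8) : msk i j k l = msk i k j l := by
  simp only [msk_eq]; ring
lemma msk_swap3 (i j k l : Fin 8) : msk i j k l = msk i j l k := by
  simp only [msk_eq]; ring

/-- A function of the mask times the sign is a 4-form. -/
lemma sg_form (s : ℕ → ℝ) : (fun i j k l => (sg i j k l : ℝ) * s (msk i j k l)) ∈ FourForm := by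
  intro i j k l
  refine ⟨?_, ?_, ?_⟩
  · simp only [sg_swap1 i j k l, msk_swap1 i j k l]; push_cast; ring
  · simp only [sg_swap2 i j k l, msk_swap2 i j k l]; push_cast; ring
  · simp only [sg_swap3 i j k l, msk_swap3 i j k l]; push_cast; ring

/-- A 4-form vanishing on increasing indices vanishes. -/
lemma form_zero (f : Fin 8 → Fin 8 → Fin 8 → Fin 8 → ℝ) (hf : f ∈ FourForm)
    (h0 : ∀ i j k l, i < j → j < k → k < l → f i j k l = 0) : ∀ i j k l, f i j k l = 0 := by
  have s1 : ∀ i j k l, f j i k l = 0 → f i j k l = 0 := fun i j k l h => by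
    rw [(hf i j k l).1, h, neg_zero]
  have s2 : ∀ i j k l, f i k j l = 0 → f i j k l = 0 := fun i j k l h => by
    rw [(hf i j k l).2.1, h, neg_zero]
  have s3 : ∀ i j k l, f i j l k = 0 → f i j k l = 0 := fun i j k l h => by
    rw [(hf i j k l).2.2, h, neg_zero]
  have e1 : ∀ i k l, f i i k l = 0 := fun i k l => by linarith [(hf i i k l).1]
  have e2 : ∀ i j l, f i j j l = 0 := fun i j l => by linarith [(hf i j j l).2.1]
  have e3 : ∀ i j k, f i j k k = 0 := fun i j k => by linarith [(hf i j k k).2.2]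
  have h1 : ∀ i j k l, j < k → k < l → f i j k l = 0 := by
    intro i j k l hjk hkl
    rcases lt_trichotomy i j with h | rfl | h
    · exact h0 _ _ _ _ h hjk hkl
    · exact e1 _ _ _
    apply s1
    rcases lt_trichotomy i k with h' | rfl | h'
    · exact h0 _ _ _ _ h h' hkl
    · exact e2 _ _ _
    apply s2
    rcases lt_trichotomy i l with h'' | rfl | h''
    · exact h0 _ _ _ _ hjk h' h''
    · exact e3 _ _ _
    apply s3
    exact h0 _ _ _ _ hjk hkl h''
  have h2 : ∀ i j k l, k < l → f i j k l = 0 := by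
    intro i j k l hkl
    rcases lt_trichotomy j k with h' | rfl | h'
    · exact h1 _ _ _ _ h' hkl
    · exact e2 _ _ _
    apply s2
    rcases lt_trichotomy j l with h'' | rfl | h''
    · exact h1 _ _ _ _ h' h''
    · exact e3 _ _ _
    apply s3
    exact h1 _ _ _ _ hkl h''
  intro i j k l
  rcases lt_trichotomy k l with h | rfl | h
  · exact h2 _ _ _ _ h
  · exact e3 _ _ _
  · exact s3 _ _ _ _ (h2 _ _ _ _ h)

lemma form_ext (f g : Fin 8 → Fin 8 → Fin 8 → Fin 8 → ℝ) (hf : f ∈ FourForm) (hg : g ∈ FourForm)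
    (h0 : ∀ i j k l, i < j → j < k → k < l → f i j k l = g i j k l) (i j k l : Fin 8) :
    f i j k l = g i j k l := by
  have := form_zero (f - g) (FourForm.sub_mem hf hg)
    (fun i j k l h1 h2 h3 => by simp [h0 i j k l h1 h2 h3]) i j k l
  simpa [sub_eq_zero] using this

/-- The coordinate of `σ` at a mask. -/
def crd (σ : Fin 8 → Fin 8 → Fin 8 → Fin 8 → ℝ) (m : ℕ) : ℝ :=
  σ (dec m).1 (dec m).2.1 (dec m).2.2.1 (dec m).2.2.2

lemma dec_msk : ∀ i j k l : Fin 8, i < j → j < k → k < l →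
    dec (msk i j k l) = (i, j, k, l) ∧ sg i j k l = 1 := by decide +kernel

lemma form_crd (σ : Fin 8 → Fin 8 → Fin 8 → Fin 8 → ℝ) (hσ : σ ∈ FourForm) (i j k l : Fin 8) :
    σ i j k l = (sg i j k l : ℝ) * crd σ (msk i j k l) := by
  refine form_ext σ _ hσ (sg_form (crd σ)) ?_ i j k l
  intro i j k l h1 h2 h3
  obtain ⟨h, h'⟩ := dec_msk i j k l h1 h2 h3
  simp [crd, h, h']

def kdZ (a b : Fin 8) : ℤ := if a = b then 1 else 0

def d3Z (b c d i j k : Fin 8) : ℤ :=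
  kdZ b i * (kdZ c j * kdZ d k - kdZ c k * kdZ d j)
  - kdZ b j * (kdZ c i * kdZ d k - kdZ c k * kdZ d i)
  + kdZ b k * (kdZ c i * kdZ d j - kdZ c j * kdZ d i)

def wZ (a b c d i j k l : Fin 8) : ℤ :=
  kdZ a i * d3Z b c d j k l - kdZ a j * d3Z b c d i k l
  + kdZ a k * d3Z b c d i j l - kdZ a l * d3Z b c d i j k

def PZ (i j k l : Fin 8) : ℤ :=
    -wZ 0 1 2 7 i j k l + wZ 0 2 3 6 i j k l - wZ 0 3 4 7 i j k l
  - wZ 0 5 6 7 i j k l + wZ 0 1 4 6 i j k l + wZ 0 2 4 5 i j k l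
  - wZ 0 1 3 5 i j k l - wZ 3 4 5 6 i j k l - wZ 1 4 5 7 i j k l
  - wZ 1 2 5 6 i j k l - wZ 1 2 3 4 i j k l - wZ 2 3 5 7 i j k l
  - wZ 1 3 6 7 i j k l + wZ 2 4 6 7 i j k l

lemma kd_cast (a b : Fin 8) : kd a b = (kdZ a b : ℝ) := by
  unfold kd kdZ; split_ifs <;> simp

lemma wedge4_cast (a b c d i j k l : Fin 8) : wedge4 a b c d i j k l = (wZ a b c d i j k l : ℝ) := by
  unfold wedge4 wZ d3Z
  simp only [kd_cast]
  simp [Matrix.det_succ_row_zero, Fin.sum_univ_succ, Fin.succAbove]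
  ring

lemma Phi_cast (i j k l : Fin 8) : Phi i j k l = (PZ i j k l : ℝ) := by
  unfold Phi PZ; simp only [wedge4_cast]; push_cast; ring

lemma wZ_swap (a b c d i j k l : Fin 8) : wZ a b c d i j k l = -wZ a b c d j i k l ∧
    wZ a b c d i j k l = -wZ a b c d i k j l ∧ wZ a b c d i j k l = -wZ a b c d i j l k := by
  unfold wZ d3Z
  refine ⟨?_, ?_, ?_⟩ <;> ring

lemma Phi_form : Phi ∈ FourForm := by
  intro i j k l
  simp only [Phi_cast]
  refine ⟨?_, ?_, ?_⟩ <;> norm_cast <;> unfold PZ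
  · simp only [fun a b c d => (wZ_swap a b c d i j k l).1]; ring
  · simp only [fun a b c d => (wZ_swap a b c d i j k l).2.1]; ring
  · simp only [fun a b c d => (wZ_swap a b c d i j k l).2.2]; ring

lemma PZ_phT : ∀ i j k l : Fin 8, i < j → j < k → k < l →
    PZ i j k l = phT (msk i j k l) := by decide +kernel

lemma Phi_eq (i j k l : Fin 8) : Phi i j k l = (phZ i j k l : ℝ) := by
  have := form_ext Phi _ Phi_form (sg_form fun m => (phT m : ℝ)) (by
    intro i j k l h1 h2 h3
    rw [Phi_cast, PZ_phT i j k l h1 h2 h3]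
    simp [(dec_msk i j k l h1 h2 h3).2]) i j k l
  rw [this]; unfold phZ; push_cast; ring

/-! ### The two families of linear equations as formal combinations -/

def pairL (i j k l : Fin 8) : LF :=
  F8.flatMap fun p => F8.flatMap fun q =>
    bif phS (msk p q k l) then oneLF (phZ p q k l * sg i j p q) (msk i j p q) else []

def BL (i j k l : Fin 8) : LF :=
  pairL i j k l ++ pairL i k l j ++ pairL i l j k ++ pairL j k i l ++ pairL j l k i ++ pairL k l i j
    ++ [(-4 * sg i j k l, msk i j k l)]

def AL (i m : Fin 8) : LF :=
  F8.flatMap fun j => F8.flatMap fun k =>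
    F8.flatMap fun l =>
      bif phS (msk m j k l) then oneLF (phZ m j k l * sg i j k l) (msk i j k l) else []

lemma ev_pairL (σ : Fin 8 → Fin 8 → Fin 8 → Fin 8 → ℝ) (hσ : σ ∈ FourForm) (i j k l : Fin 8) :
    ev (crd σ) (pairL i j k l) = ∑ p, ∑ q, σ i j p q * Phi p q k l := by
  unfold pairL
  rw [ev_flatMap_fin]
  refine Finset.sum_congr rfl fun p _ => ?_
  rw [ev_flatMap_fin]
  refine Finset.sum_congr rfl fun q _ => ?_
  rw [Phi_eq, form_crd σ hσ i j p q]
  cases h : phS (msk p q k l) with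
  | false => simp [phZ, phT_zero _ h]
  | true => simp [ev_one]; ring

lemma ev_BL (σ : Fin 8 → Fin 8 → Fin 8 → Fin 8 → ℝ) (hσ : σ ∈ FourForm) (i j k l : Fin 8) :
    ev (crd σ) (BL i j k l) = OmegaOp σ i j k l - 4 * σ i j k l := by
  unfold BL
  simp only [ev_append, ev_pairL σ hσ, ev_cons, ev_nil]
  rw [form_crd σ hσ i j k l]
  simp only [OmegaOp, LinearMap.coe_mk, AddHom.coe_mk]
  push_cast; ring

lemma ev_AL (σ : Fin 8 → Fin 8 → Fin 8 → Fin 8 → ℝ) (hσ : σ ∈ FourForm) (i m : Fin 8) :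
    ev (crd σ) (AL i m) = ∑ j, ∑ k, ∑ l, σ i j k l * Phi m j k l := by
  unfold AL
  rw [ev_flatMap_fin]
  refine Finset.sum_congr rfl fun j _ => ?_
  rw [ev_flatMap_fin]
  refine Finset.sum_congr rfl fun k _ => ?_
  rw [ev_flatMap_fin]
  refine Finset.sum_congr rfl fun l _ => ?_
  rw [Phi_eq, form_crd σ hσ i j k l]
  cases h : phS (msk m j k l) with
  | false => simp [phZ, phT_zero _ h]
  | true => simp [ev_one]; ring

lemma Omega_form (σ : Fin 8 → Fin 8 → Fin 8 → Fin 8 → ℝ) (hσ : σ ∈ FourForm) :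
    OmegaOp σ ∈ FourForm := by
  have hP : ∀ a b k l, ∑ p, ∑ q, σ a b p q * Phi p q k l = -∑ p, ∑ q, σ a b p q * Phi p q l k := by
    intro a b k l
    simp only [← Finset.sum_neg_distrib]
    refine Finset.sum_congr rfl fun p _ => Finset.sum_congr rfl fun q _ => ?_
    rw [(Phi_form p q k l).2.2]; ring
  have hS : ∀ a b k l, ∑ p, ∑ q, σ a b p q * Phi p q k l = -∑ p, ∑ q, σ b a p q * Phi p q k l := by
    intro a b k l
    simp only [← Finset.sum_neg_distrib]
    refine Finset.sum_congr rfl fun p _ => Finset.sum_congr rfl fun q _ => ?_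
    rw [(hσ a b p q).1]; ring
  intro i j k l
  simp only [OmegaOp, LinearMap.coe_mk, AddHom.coe_mk]
  refine ⟨?_, ?_, ?_⟩
  · linarith [hS i j k l, hP j k i l, hP i k l j, hP i l j k, hP j l k i, hP k l i j]
  · linarith [hS j k i l, hP i j k l, hP i k l j, hP i l j k, hP j l k i, hP k l i j]
  · linarith [hS k l i j, hP i j k l, hP i k l j, hP i l j k, hP j l k i, hP j k i l]

/-! ### The reduced system -/

/-- `rel` expresses the coordinate at `msk` through free coordinates; `cB`, `cA` certify
`dB` (resp. `dA`) times this relation from the eigenvalue (resp. contraction) equations. -/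
structure Row where
  m : ℕ
  rel : LF
  dB : ℤ
  cB : LF
  dA : ℤ
  cA : LF

def tbl : List Row := [
  ⟨15, [(1, 240)], 4, [(-2, 15), (1, 105), (1, 150)], 12, [(-1, 4), (1, 14), (1, 21), (-1, 31), (2, 32)]⟩,
  ⟨23, [(-1, 232)], 4, [(-2, 23), (1, 113), (-1, 142)], 12, [(1, 3), (1, 13), (-1, 22), (-2, 24), (-1, 39)]⟩,
  ⟨39, [(1, 216)], 4, [(-2, 39), (1, 57), (1, 198)], 12, [(1, 6), (-1, 12), (1, 19), (-2, 26), (-1, 47)]⟩,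
  ⟨71, [(-1, 184)], 4, [(-2, 71), (1, 89), (-1, 166)], 12, [(-1, 5), (1, 11), (1, 20), (-2, 25), (-1, 55)]⟩,
  ⟨135, [(1, 120)], 4, [(-2, 135), (1, 225), (1, 30)], 24, [(-1, 0), (-1, 9), (-1, 18), (1, 27), (1, 36), (1, 45), (1, 54), (-1, 63)]⟩,
  ⟨27, [(1, 228)], 4, [(-2, 27), (1, 209), (-1, 46)], 12, [(-1, 2), (-1, 15), (2, 16), (-1, 30), (-1, 37)]⟩,
  ⟨43, [(-1, 212)], 4, [(-2, 43), (1, 225), (1, 30)], 24, [(-1, 0), (-1, 9), (1, 18), (-1, 27), (1, 36), (-1, 45), (1, 54), (1, 63)]⟩,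
  ⟨75, [(1, 180)], 4, [(-2, 75), (-1, 85), (-1, 170)], 12, [(1, 7), (1, 17), (1, 28), (-1, 46)]⟩,
  ⟨139, [(-1, 116)], 4, [(-2, 139), (-1, 57), (-1, 198)], 12, [(-1, 6), (1, 12), (-1, 19), (-1, 47)]⟩,
  ⟨51, [(1, 204)], 4, [(-2, 51), (-1, 85), (-1, 170)], 12, [(1, 7), (1, 17), (-1, 28), (1, 46)]⟩,
  ⟨83, [(-1, 172)], 4, [(-2, 83), (-1, 225), (-1, 30)], 24, [(1, 0), (1, 9), (-1, 18), (-1, 27), (1, 36), (-1, 45), (1, 54), (-1, 63)]⟩,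
  ⟨147, [(1, 108)], 4, [(-2, 147), (1, 89), (-1, 166)], 12, [(-1, 5), (-1, 11), (-1, 20), (1, 55)]⟩,
  ⟨99, [(1, 156)], 4, [(-2, 99), (1, 209), (-1, 46)], 12, [(1, 2), (-1, 15), (1, 30), (1, 37)]⟩,
  ⟨163, [(-1, 92)], 4, [(-2, 163), (1, 105), (1, 150)], 12, [(1, 4), (1, 14), (-1, 21), (1, 31)]⟩,
  ⟨195, [(1, 60)], 4, [(-2, 195), (-1, 113), (1, 142)], 12, [(1, 3), (-1, 13), (-1, 22), (-1, 39)]⟩,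
  ⟨29, [(-1, 226)], 4, [(-2, 29), (1, 177), (1, 78)], 12, [(1, 1), (-2, 8), (-1, 23), (-1, 29), (1, 38)]⟩,
  ⟨45, [(1, 210)], 4, [(-2, 45), (-1, 85), (-1, 170)], 12, [(1, 7), (-2, 10), (1, 17), (1, 28), (1, 46)]⟩,
  ⟨77, [(-1, 178)], 4, [(-2, 77), (-1, 225), (-1, 30)], 24, [(1, 0), (-1, 9), (1, 18), (1, 27), (-1, 36), (-1, 45), (1, 54), (-1, 63)]⟩,
  ⟨141, [(1, 114)], 4, [(-2, 141), (1, 89), (-1, 166)], 12, [(-1, 5), (1, 11), (1, 20), (1, 55)]⟩,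
  ⟨53, [(-1, 202)], 4, [(-2, 53), (-1, 225), (-1, 30)], 24, [(1, 0), (-1, 9), (1, 18), (-1, 27), (1, 36), (1, 45), (-1, 54), (-1, 63)]⟩,
  ⟨85, [(1, 210), (1, 204), (1, 180)], 8, [(-2, 75), (-2, 51), (-2, 45), (-5, 85), (-3, 170)], 12, [(1, 7), (-2, 10), (3, 17), (1, 28), (1, 46)]⟩,
  ⟨149, [(-1, 106)], 4, [(-2, 149), (1, 57), (1, 198)], 12, [(1, 6), (1, 12), (-1, 19), (1, 47)]⟩,
  ⟨101, [(-1, 154)], 4, [(-2, 101), (1, 177), (1, 78)], 12, [(-1, 1), (-1, 23), (1, 29), (-1, 38)]⟩,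
  ⟨165, [(1, 90)], 4, [(-2, 165), (-1, 113), (1, 142)], 12, [(1, 3), (1, 13), (1, 22), (-1, 39)]⟩,
  ⟨197, [(-1, 58)], 4, [(-2, 197), (-1, 105), (-1, 150)], 12, [(-1, 4), (1, 14), (-1, 21), (-1, 31)]⟩,
  ⟨57, [(1, 106), (-1, 116), (-1, 216)], 8, [(2, 39), (-2, 139), (2, 149), (-5, 57), (-3, 198)], 12, [(-1, 6), (1, 12), (-1, 19), (2, 26), (-1, 47)]⟩,
  ⟨89, [(-1, 114), (-1, 108), (1, 184)], 8, [(2, 71), (2, 147), (2, 141), (-5, 89), (3, 166)], 12, [(1, 5), (-1, 11), (-1, 20), (2, 25), (-1, 55)]⟩,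
  ⟨153, [(1, 102)], 4, [(-2, 153), (1, 225), (1, 30)], 24, [(-1, 0), (1, 9), (1, 18), (-1, 27), (-1, 36), (1, 45), (1, 54), (-1, 63)]⟩,
  ⟨105, [(-1, 58), (1, 92), (-1, 240)], 8, [(2, 15), (2, 163), (-2, 197), (-5, 105), (-3, 150)], 12, [(1, 4), (-1, 14), (-1, 21), (-1, 31), (-2, 32)]⟩,
  ⟨169, [(-1, 86)], 4, [(-2, 169), (-1, 209), (1, 46)], 12, [(-1, 2), (-1, 15), (1, 30), (-1, 37)]⟩,
  ⟨201, [(1, 54)], 4, [(-2, 201), (1, 177), (1, 78)], 12, [(-1, 1), (1, 23), (-1, 29), (-1, 38)]⟩,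
  ⟨113, [(1, 90), (1, 60), (1, 232)], 8, [(2, 23), (-2, 195), (-2, 165), (-5, 113), (3, 142)], 12, [(-1, 3), (-1, 13), (1, 22), (2, 24), (-1, 39)]⟩,
  ⟨177, [(-1, 54), (1, 154), (1, 226)], 8, [(2, 29), (2, 101), (2, 201), (-5, 177), (-3, 78)], 12, [(-1, 1), (2, 8), (1, 23), (1, 29), (1, 38)]⟩,
  ⟨209, [(-1, 86), (-1, 156), (-1, 228)], 8, [(2, 27), (2, 99), (-2, 169), (-5, 209), (3, 46)], 12, [(1, 2), (1, 15), (-2, 16), (1, 30), (-1, 37)]⟩,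
  ⟨225, [(-1, 102), (-1, 202), (-1, 178), (-1, 172), (1, 212), (-1, 120)], 4, [(1, 135), (1, 43), (-1, 83), (-1, 77), (-1, 53), (1, 153), (-4, 225), (-3, 30)], 12, [(1, 0), (-1, 45), (-1, 54), (-1, 63)]⟩,
  ⟨30, [(-1, 102), (-1, 202), (-1, 178), (-1, 172), (1, 212), (-1, 120)], 4, [(1, 135), (1, 43), (-1, 83), (-1, 77), (-1, 53), (1, 153), (-3, 225), (-4, 30)], 24, [(3, 0), (-1, 9), (-1, 18), (-1, 27), (-1, 36), (-1, 45), (-1, 54), (-1, 63)]⟩,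
  ⟨46, [(1, 86), (1, 156), (1, 228)], 8, [(-2, 27), (-2, 99), (2, 169), (3, 209), (-5, 46)], 6, [(1, 16)]⟩,
  ⟨78, [(-1, 54), (1, 154), (1, 226)], 8, [(2, 29), (2, 101), (2, 201), (-3, 177), (-5, 78)], 6, [(1, 8)]⟩,
  ⟨142, [(-1, 90), (-1, 60), (-1, 232)], 8, [(-2, 23), (2, 195), (2, 165), (3, 113), (-5, 142)], 6, [(-1, 24)]⟩,
  ⟨150, [(-1, 58), (1, 92), (-1, 240)], 8, [(2, 15), (2, 163), (-2, 197), (-3, 105), (-5, 150)], 6, [(-1, 32)]⟩,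
  ⟨166, [(1, 114), (1, 108), (-1, 184)], 8, [(-2, 71), (-2, 147), (-2, 141), (3, 89), (-5, 166)], 6, [(-1, 5), (1, 11), (-1, 25)]⟩,
  ⟨198, [(1, 106), (-1, 116), (-1, 216)], 8, [(2, 39), (-2, 139), (2, 149), (-3, 57), (-5, 198)], 6, [(-1, 6), (-1, 19), (1, 26)]⟩,
  ⟨170, [(1, 210), (1, 204), (1, 180)], 8, [(-2, 75), (-2, 51), (-2, 45), (-3, 85), (-5, 170)], 6, [(1, 7), (-1, 10), (1, 17)]⟩]

def free : List ℕ :=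
  [54, 86, 102, 58, 90, 154, 106, 202, 114, 178, 210, 226, 60, 92, 156, 108, 172, 204, 116, 180, 212, 228, 120, 184, 216, 232, 240]

def red (m : ℕ) : LF :=
  match tbl.find? (fun e => e.m == m) with
  | some e => e.rel
  | none => [(1, m)]

def BLd (m : ℕ) : LF := BL (dec m).1 (dec m).2.1 (dec m).2.2.1 (dec m).2.2.2

def ALd (n : ℕ) : LF := AL (Fin.ofNat 8 (n / 8)) (Fin.ofNat 8 (n % 8))

lemma checkB : ∀ e ∈ tbl, e.dB ≠ 0 ∧ nrmLF ((-e.dB, e.m) :: (scaleLF e.dB e.rel ++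
    e.cB.flatMap fun x => scaleLF x.1 (BLd x.2))) = [] := by decide +kernel

lemma checkA : ∀ e ∈ tbl, e.dA ≠ 0 ∧ nrmLF ((-e.dA, e.m) :: (scaleLF e.dA e.rel ++
    e.cA.flatMap fun x => scaleLF x.1 (ALd x.2))) = [] := by decide +kernel

def subL (L : LF) : LF := L.flatMap fun x => scaleLF x.1 (red x.2)

lemma backB : ∀ i j k l : Fin 8, i < j → j < k → k < l → nrmLF (subL (BL i j k l)) = [] := by
  decide +kernel

lemma backA : ∀ i m : Fin 8, nrmLF (subL (AL i m)) = [] := by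
  decide +kernel

lemma red_free : ∀ i j k l : Fin 8, i < j → j < k → k < l →
    ∀ x ∈ red (msk i j k l), x.2 ∈ free := by decide +kernel

lemma rel_free : ∀ e ∈ tbl, ∀ x ∈ e.rel, x.2 ∈ free := by decide +kernel

def okd (m : ℕ) : Prop :=
  sg (dec m).1 (dec m).2.1 (dec m).2.2.1 (dec m).2.2.2 = 1 ∧
  msk (dec m).1 (dec m).2.1 (dec m).2.2.1 (dec m).2.2.2 = m

instance (m : ℕ) : Decidable (okd m) := by unfold okd; infer_instance

lemma tbl_okd : ∀ e ∈ tbl, okd e.m := by decide +kernel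

lemma free_okd : ∀ m ∈ free, okd m ∧ red m = [(1, m)] := by decide +kernel

lemma free_nodup : free.Nodup := by decide +kernel

lemma free_len : free.length = 27 := by decide +kernel

def RelS (s : ℕ → ℝ) : Prop := ∀ m, s m = ev s (red m)

lemma Rel_of_tbl (s : ℕ → ℝ) (h : ∀ e ∈ tbl, s e.m = ev s e.rel) : RelS s := by
  intro m
  unfold red
  cases hf : tbl.find? (fun e => e.m == m) with
  | none => simp
  | some e =>
    have h1 := List.mem_of_find?_eq_some hf
    have h2 := List.find?_some hf
    simp only [beq_iff_eq] at h2
    simpa [h2] using h e h1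

lemma cert_use (s : ℕ → ℝ) (m : ℕ) (r : LF) (d : ℤ) (c : LF) (F : ℕ → LF) (hd : d ≠ 0)
    (hF : ∀ n, ev s (F n) = 0)
    (h : nrmLF ((-d, m) :: (scaleLF d r ++ c.flatMap fun x => scaleLF x.1 (F x.2))) = []) :
    s m = ev s r := by
  have h1 := ev_eq_zero_of_nrm s _ h
  rw [ev_cons, ev_append, ev_scale, ev_flatMap] at h1
  simp only [ev_scale, hF, mul_zero, List.map_const', List.sum_replicate, nsmul_zero, add_zero] at h1
  have hd' : (d : ℝ) ≠ 0 := by exact_mod_cast hd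
  push_cast at h1
  apply mul_left_cancel₀ hd'
  linarith

lemma ev_sub (s : ℕ → ℝ) (hs : RelS s) (L : LF) : ev s (subL L) = ev s L := by
  induction L with
  | nil => rfl
  | cons x t ih =>
    have : subL (x :: t) = scaleLF x.1 (red x.2) ++ subL t := rfl
    rw [this, ev_append, ev_scale, ← hs, ih, ev_cons]

lemma Rel_of_B (σ : Fin 8 → Fin 8 → Fin 8 → Fin 8 → ℝ) (hσ : σ ∈ FourForm)
    (h : ∀ i j k l, OmegaOp σ i j k l = 4 * σ i j k l) : RelS (crd σ) :=
  Rel_of_tbl _ fun e he => cert_use _ _ _ _ _ BLd (checkB e he).1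
    (fun n => by unfold BLd; rw [ev_BL σ hσ, h, sub_self]) (checkB e he).2

lemma Rel_of_A (σ : Fin 8 → Fin 8 → Fin 8 → Fin 8 → ℝ) (hσ : σ ∈ FourForm)
    (h : ∀ i m, (∑ j, ∑ k, ∑ l, σ i j k l * Phi m j k l) = 0) : RelS (crd σ) :=
  Rel_of_tbl _ fun e he => cert_use _ _ _ _ _ ALd (checkA e he).1
    (fun n => by unfold ALd; rw [ev_AL σ hσ, h]) (checkA e he).2

lemma B_of_Rel (σ : Fin 8 → Fin 8 → Fin 8 → Fin 8 → ℝ) (hσ : σ ∈ FourForm)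
    (h : RelS (crd σ)) (i j k l : Fin 8) : OmegaOp σ i j k l = 4 * σ i j k l := by
  refine form_ext (OmegaOp σ) ((4 : ℝ) • σ) (Omega_form σ hσ) (FourForm.smul_mem _ hσ) ?_ i j k l
  intro i j k l h1 h2 h3
  have := ev_BL σ hσ i j k l
  rw [← ev_sub _ h, ev_eq_zero_of_nrm _ _ (backB i j k l h1 h2 h3)] at this
  simp only [Pi.smul_apply, smul_eq_mul]
  linarith

lemma A_of_Rel (σ : Fin 8 → Fin 8 → Fin 8 → Fin 8 → ℝ) (hσ : σ ∈ FourForm)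
    (h : RelS (crd σ)) (i m : Fin 8) : (∑ j, ∑ k, ∑ l, σ i j k l * Phi m j k l) = 0 := by
  rw [← ev_AL σ hσ, ← ev_sub _ h, ev_eq_zero_of_nrm _ _ (backA i m)]

/-! ### The dimension -/

def frT (t : Fin 27) : ℕ := free.get (Fin.cast free_len.symm t)

lemma frT_mem (t : Fin 27) : frT t ∈ free := List.get_mem _ _

lemma frT_inj : Function.Injective frT := by
  intro a b h
  have := (List.nodup_iff_injective_get.mp free_nodup) h
  simpa using this

lemma mem_frT (m : ℕ) (h : m ∈ free) : ∃ t, frT t = m := by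
  obtain ⟨n, hn⟩ := List.get_of_mem h
  exact ⟨Fin.cast free_len n, by simpa [frT] using hn⟩

/-- The coordinate map to the free coordinates. -/
def coordMap : ↥(FourForm ⊓ Module.End.eigenspace OmegaOp 4) →ₗ[ℝ] (Fin 27 → ℝ) where
  toFun σ t := crd σ.1 (frT t)
  map_add' _ _ := rfl
  map_smul' _ _ := rfl

lemma mem_eig (σ : Fin 8 → Fin 8 → Fin 8 → Fin 8 → ℝ) :
    σ ∈ Module.End.eigenspace OmegaOp 4 ↔ ∀ i j k l, OmegaOp σ i j k l = 4 * σ i j k l := by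
  rw [Module.End.mem_eigenspace_iff]
  constructor
  · intro h i j k l; rw [h]; rfl
  · intro h; funext i j k l; rw [h]; rfl

lemma ev_congr_zero (s : ℕ → ℝ) (L : LF) (h : ∀ x ∈ L, s x.2 = 0) : ev s L = 0 := by
  induction L with
  | nil => rfl
  | cons x t ih =>
    rw [ev_cons, h x (by simp), ih fun y hy => h y (by simp [hy])]; simp

lemma ev_congr (s s' : ℕ → ℝ) (L : LF) (h : ∀ x ∈ L, s x.2 = s' x.2) : ev s L = ev s' L := by
  induction L with
  | nil => rfl
  | cons x t ih =>
    rw [ev_cons, ev_cons, h x (by simp), ih fun y hy => h y (by simp [hy])]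

lemma coordMap_inj : Function.Injective coordMap := by
  rw [← LinearMap.ker_eq_bot, LinearMap.ker_eq_bot']
  rintro ⟨σ, h1, h2⟩ h
  have hR := Rel_of_B σ h1 ((mem_eig σ).1 h2)
  have hz : ∀ m ∈ free, crd σ m = 0 := by
    intro m hm
    obtain ⟨t, rfl⟩ := mem_frT m hm
    exact congrFun h t
  apply Subtype.ext
  funext i j k l
  refine form_zero σ h1 ?_ i j k l
  intro i j k l a b c
  rw [form_crd σ h1, hR, ev_congr_zero _ _ fun x hx => hz _ (red_free i j k l a b c x hx), mul_zero]

lemma coordMap_surj : Function.Surjective coordMap := by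
  intro w
  let s0 : ℕ → ℝ := fun m => ∑ t, if frT t = m then w t else 0
  let σ : Fin 8 → Fin 8 → Fin 8 → Fin 8 → ℝ :=
    fun i j k l => (sg i j k l : ℝ) * ev s0 (red (msk i j k l))
  have hσ : σ ∈ FourForm := sg_form fun m => ev s0 (red m)
  have hc : ∀ m, okd m → crd σ m = ev s0 (red m) := by
    rintro m ⟨h1, h2⟩
    simp only [crd, σ, h1, h2]; simp
  have hfree : ∀ m ∈ free, crd σ m = s0 m := by
    intro m hm
    rw [hc m (free_okd m hm).1, (free_okd m hm).2]; simp
  have hred : ∀ m, okd m → (∀ x ∈ red m, x.2 ∈ free) → crd σ m = ev (crd σ) (red m) := by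
    intro m hm hx
    rw [hc m hm]
    exact ev_congr _ _ _ fun x h => (hfree _ (hx x h)).symm
  have hR : RelS (crd σ) := by
    intro m
    cases hf : tbl.find? (fun e => e.m == m) with
    | none => simp [red, hf]
    | some e =>
      have h1 := List.mem_of_find?_eq_some hf
      have h2 := List.find?_some hf
      simp only [beq_iff_eq] at h2
      apply hred
      · rw [← h2]; exact tbl_okd e h1
      · have : red m = e.rel := by simp [red, hf]
        rw [this]; exact rel_free e h1
  refine ⟨⟨σ, hσ, (mem_eig σ).2 (B_of_Rel σ hσ hR)⟩, ?_⟩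
  funext t
  change crd σ (frT t) = w t
  rw [hfree _ (frT_mem t)]
  simp only [s0, frT_inj.eq_iff]
  simp

/-- A 4-form `σ` satisfies `Ω_Φ(σ) = 4σ` iff `σ_{ijkl}Φ_{mjkl} = 0` for all `i,m`; this
eigenspace `Λ⁴₂₇` has dimension 27. -/
theorem spin7_omega_eigenvalue_four :
    (∀ σ, σ ∈ FourForm →
      ((∀ i j k l, OmegaOp σ i j k l = 4 * σ i j k l) ↔
        ∀ i m, (∑ j, ∑ k, ∑ l, σ i j k l * Phi m j k l) = 0)) ∧
    Module.finrank ℝ ↥(FourForm ⊓ Module.End.eigenspace OmegaOp 4) = 27 := by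
  refine ⟨fun σ hσ => ⟨fun h => A_of_Rel σ hσ (Rel_of_B σ hσ h),
    fun h => B_of_Rel σ hσ (Rel_of_A σ hσ h)⟩, ?_⟩
  rw [(LinearEquiv.ofBijective coordMap ⟨coordMap_inj, coordMap_surj⟩).finrank_eq]
  simp
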